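/- The quadratic polynomial q = ae + bf + cd + de + df + ef + d^2 + e^2 + f^2 ∈ F_2[a,b,c,d,e,f] is a G-invariant: for every σ ∈ G, substituting the linear forms (a,b,c,d,e,f)·D(σ) for the variables fixes q. Moreover, q is a nondegenerate quadratic form of Witt index 3 (plus type) on F_2^6, and the representation D: G → GL_6(F_2) is injective; hence D embeds G = GL_3(F_2) into the orthogonal group O_6^+(F_2) of q. -/

import Mathlib

set_option synthInstance.maxHeartbeats 1000000
set_option maxHeartbeats 1000000

open MvPolynomial

/-- The field with two elements. -/
abbrev F2 := ZMod 2

/-- `G = GL₃(𝔽₂)`. -/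
abbrev G3 := GL (Fin 3) F2

/-- The generator `A` of `G`. -/
def Agen : G3 := ⟨!![1,0,1; 0,1,0; 0,0,1], !![1,0,1; 0,1,0; 0,0,1], by decide, by decide⟩

/-- The generator `B` of `G`. -/
def Bgen : G3 := ⟨!![0,0,1; 1,0,0; 0,1,0], !![0,1,0; 0,0,1; 1,0,0], by decide, by decide⟩

/-- The matrix `D(A)` of the action on `W'^* = 𝔽₂⁶`. -/
def DA6 : Matrix (Fin 6) (Fin 6) F2 :=
  !![1,0,1,0,0,1; 0,1,0,0,0,0; 0,0,1,0,0,0; 0,0,0,1,1,0; 0,0,0,0,1,0; 0,0,0,0,0,1]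

/-- The matrix `D(B)` of the action on `W'^* = 𝔽₂⁶`. -/
def DB6 : Matrix (Fin 6) (Fin 6) F2 :=
  !![0,0,1,0,0,0; 1,0,0,0,0,0; 0,1,0,0,0,0; 0,0,0,0,0,1; 0,0,0,1,0,0; 0,0,0,0,1,0]

/-- The algebra endomorphism of `S[W'^*] = 𝔽₂[a,b,c,d,e,f]` induced by the right action of
`σ` on the linear forms (coefficient row vectors are multiplied on the right by `D σ`; in
particular the variable `Xᵢ` is sent to the linear form given by the `i`-th row of `D σ`). -/
noncomputable def polyAct (D : G3 →* GL (Fin 6) F2) (σ : G3) :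
    MvPolynomial (Fin 6) F2 →ₐ[F2] MvPolynomial (Fin 6) F2 :=
  aeval (fun i => ∑ j, (D σ : Matrix (Fin 6) (Fin 6) F2) i j • X j)

/-- The invariant ring `S[W'^*]^H` for a subgroup `H ≤ G`. -/
noncomputable def invH (D : G3 →* GL (Fin 6) F2) (H : Subgroup G3) :
    Subalgebra F2 (MvPolynomial (Fin 6) F2) where
  carrier := {p | ∀ σ ∈ H, polyAct D σ p = p}
  mul_mem' := fun ha hb σ hσ => by rw [map_mul, ha σ hσ, hb σ hσ]
  add_mem' := fun ha hb σ hσ => by rw [map_add, ha σ hσ, hb σ hσ]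
  one_mem' := fun σ _ => map_one _
  zero_mem' := fun σ _ => map_zero _
  algebraMap_mem' := fun r σ _ => AlgHom.commutes _ r

/-- The invariant ring `S[W'^*]^G`. -/
noncomputable def invG (D : G3 →* GL (Fin 6) F2) :
    Subalgebra F2 (MvPolynomial (Fin 6) F2) :=
  invH D ⊤

/-- The invariant quadric
`q = ae + bf + cd + de + df + ef + d² + e² + f²` in `𝔽₂[a,b,c,d,e,f]`,
with `(a,b,c,d,e,f) = (X 0, …, X 5)`. -/
noncomputable def qForm : MvPolynomial (Fin 6) F2 :=
  X 0 * X 4 + X 1 * X 5 + X 2 * X 3 + X 3 * X 4 + X 3 * X 5 + X 4 * X 5 +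
    X 3 ^ 2 + X 4 ^ 2 + X 5 ^ 2

theorem aux_top (S : Submonoid G3) (hA : Agen ∈ S) (hB : Bgen ∈ S) (g : G3) : g ∈ S := by
  have e02 := hA
  have hB2 : Bgen * Bgen ∈ S := S.mul_mem hB hB
  have e10 : Bgen * Agen * (Bgen * Bgen) ∈ S := S.mul_mem (S.mul_mem hB hA) hB2
  have e21 : (Bgen * Bgen) * Agen * Bgen ∈ S := S.mul_mem (S.mul_mem hB2 hA) hB
  have key : ∀ i j : Fin 3, i ≠ j → ∃ s ∈ S, s.val = Matrix.transvection i j (1 : F2) := by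
    have c : ∀ x y : G3, x ∈ S → y ∈ S → x * y * x * y ∈ S := fun x y hx hy =>
      S.mul_mem (S.mul_mem (S.mul_mem hx hy) hx) hy
    intro i j hij
    fin_cases i <;> fin_cases j
    · exact absurd rfl hij
    · exact ⟨_, c _ _ e02 e21, by decide⟩
    · exact ⟨_, e02, by decide⟩
    · exact ⟨_, e10, by decide⟩
    · exact absurd rfl hij
    · exact ⟨_, c _ _ e10 e02, by decide⟩
    · exact ⟨_, c _ _ e21 e10, by decide⟩
    · exact ⟨_, e21, by decide⟩
    · exact absurd rfl hij
  have two : ∀ x : F2, x = 0 ∨ x = 1 := by decide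
  have hdet : g.val.det ≠ 0 := ((Matrix.isUnit_iff_isUnit_det _).1 g.isUnit).ne_zero
  have main : ∃ s ∈ S, s.val = g.val := by
    refine Matrix.diagonal_transvection_induction_of_det_ne_zero
      (fun M => ∃ s ∈ S, s.val = M) g.val hdet ?_ ?_ ?_
    · intro d hd
      refine ⟨1, S.one_mem, ?_⟩
      rw [Matrix.det_diagonal, Finset.prod_ne_zero_iff] at hd
      have : d = fun _ => 1 := by
        funext i
        exact (two (d i)).resolve_left (hd i (Finset.mem_univ i))
      rw [this, Matrix.diagonal_one]; rfl
    · rintro ⟨i, j, hij, c⟩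
      rcases two c with rfl | rfl
      · exact ⟨1, S.one_mem, by simp [Matrix.TransvectionStruct.toMatrix]⟩
      · exact key i j hij
    · rintro M N _ _ ⟨s, hs, rfl⟩ ⟨t, ht, rfl⟩
      exact ⟨s * t, S.mul_mem hs ht, rfl⟩
  obtain ⟨s, hs, h⟩ := main
  rwa [← (Units.ext h : s = g)]

theorem aux_polyAct_mul (D : G3 →* GL (Fin 6) F2) (σ τ : G3) (p : MvPolynomial (Fin 6) F2) :
    polyAct D (σ * τ) p = polyAct D τ (polyAct D σ p) := by
  have : polyAct D (σ * τ) = (polyAct D τ).comp (polyAct D σ) := by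
    apply MvPolynomial.algHom_ext
    intro i
    simp only [polyAct, aeval_X, AlgHom.comp_apply, map_sum, map_smul, map_mul, Units.val_mul,
      Matrix.mul_apply, Finset.sum_smul, Finset.smul_sum, smul_smul]
    exact Finset.sum_comm
  rw [this]; rfl

theorem aux_polyAct_one (D : G3 →* GL (Fin 6) F2) (p : MvPolynomial (Fin 6) F2) :
    polyAct D 1 p = p := by
  have : polyAct D 1 = AlgHom.id F2 _ := by
    apply MvPolynomial.algHom_ext
    intro i
    simp [polyAct, Matrix.one_apply]
  rw [this]; rfl

/-- The quadratic polynomial `q` is a `G`-invariant; moreover `q` is a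
nondegenerate quadratic form of Witt index `3` (plus type) on `𝔽₂⁶` and the
representation `D : G → GL₆(𝔽₂)` is injective; hence `D` embeds `G = GL₃(𝔽₂)` into the
orthogonal group `O₆⁺(𝔽₂)` of `q`. -/
theorem stmt17 (D : G3 →* GL (Fin 6) F2)
    (hA : (D Agen : Matrix (Fin 6) (Fin 6) F2) = DA6)
    (hB : (D Bgen : Matrix (Fin 6) (Fin 6) F2) = DB6) :
    -- `q` is `G`-invariant …
    (∀ σ : G3, polyAct D σ qForm = qForm) ∧
    -- … the polar form of `q` is nondegenerate …
    (∀ u : Fin 6 → F2,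
      (∀ v : Fin 6 → F2,
        eval (u + v) qForm - eval u qForm - eval v qForm = 0) → u = 0) ∧
    -- … `q` has Witt index `3` (plus type): there is a totally singular subspace of
    -- dimension `3` (necessarily maximal in dimension `6`) …
    (∃ T : Submodule F2 (Fin 6 → F2), Module.finrank F2 T = 3 ∧
      ∀ w ∈ T, eval w qForm = 0) ∧
    -- … and `D` is injective, so it embeds `G` into `O₆⁺(𝔽₂)`:
    Function.Injective D := by
  have h2 : (2 : MvPolynomial (Fin 6) F2) = 0 := by
    have := CharP.cast_eq_zero (MvPolynomial (Fin 6) F2) 2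
    exact_mod_cast this
  refine ⟨?_, ?_, ?_, ?_⟩
  · let S : Submonoid G3 :=
      { carrier := {σ | polyAct D σ qForm = qForm}
        one_mem' := aux_polyAct_one D _
        mul_mem' := by
          intro a b ha hb
          simp only [Set.mem_ofPred_eq] at *
          rw [aux_polyAct_mul, ha, hb] }
    refine aux_top S ?_ ?_
    · change polyAct D Agen qForm = qForm
      simp only [polyAct, hA, qForm, map_add, map_mul, map_pow, aeval_X]
      simp [Fin.sum_univ_six, DA6]
      linear_combination (X 2 * X 4 + X 4 * X 5 + X 4 ^ 2 + X 3 * X 4) * h2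
    · change polyAct D Bgen qForm = qForm
      simp only [polyAct, hB, qForm, map_add, map_mul, map_pow, aeval_X]
      simp [Fin.sum_univ_six, DB6]
      ring
  · intro u hu
    have h0 := hu (Pi.single 0 1)
    have h1 := hu (Pi.single 1 1)
    have h2 := hu (Pi.single 2 1)
    have h3 := hu (Pi.single 3 1)
    have h4 := hu (Pi.single 4 1)
    have h5 := hu (Pi.single 5 1)
    simp [qForm, Pi.single_apply] at h0 h1 h2 h3 h4 h5
    have e4 : u 4 = 0 := by linear_combination h0
    have e5 : u 5 = 0 := by linear_combination h1
    have e3 : u 3 = 0 := by linear_combination h2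
    simp [e3, e4, e5] at h3 h4 h5
    funext i
    fin_cases i <;> simp [*]
  · let f : (Fin 3 → F2) →ₗ[F2] (Fin 6 → F2) :=
      { toFun := fun v => ![v 0, v 1, v 2, 0, 0, 0]
        map_add' := by intro v w; ext i; fin_cases i <;> simp
        map_smul' := by intro c v; ext i; fin_cases i <;> simp }
    have hf : Function.Injective f := by
      intro v w h
      funext i
      fin_cases i
      · exact congrFun h 0
      · exact congrFun h 1
      · exact congrFun h 2
    refine ⟨LinearMap.range f, ?_, ?_⟩
    · rw [LinearMap.finrank_range_of_inj hf]; simp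
    · rintro _ ⟨v, rfl⟩
      simp [f, qForm]
  · let S : Submonoid G3 :=
      { carrier := {σ | ∀ i j : Fin 3,
          (D σ).val (Fin.castAdd 3 i) (Fin.castAdd 3 j) = σ.val i j ∧
          (D σ).val (Fin.natAdd 3 i) (Fin.castAdd 3 j) = 0}
        one_mem' := by
          change ∀ i j : Fin 3, _
          rw [map_one]
          intro i j; fin_cases i <;> fin_cases j <;> exact ⟨rfl, rfl⟩
        mul_mem' := by
          intro a b ha hb i j
          simp only [map_mul, Units.val_mul, Matrix.mul_apply]
          constructor
          · rw [Fin.sum_univ_add (a := 3) (b := 3)]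
            simp only [(ha _ _).1, (hb _ _).1, (hb _ _).2, mul_zero, Finset.sum_const_zero, add_zero]
          · rw [Fin.sum_univ_add (a := 3) (b := 3)]
            simp only [(ha _ _).2, (hb _ _).2, zero_mul, mul_zero, Finset.sum_const_zero, add_zero] }
    have hS : ∀ σ, σ ∈ S := by
      refine aux_top S ?_ ?_
      · change ∀ i j : Fin 3, _
        rw [hA]
        intro i j; fin_cases i <;> fin_cases j <;> exact ⟨rfl, rfl⟩
      · change ∀ i j : Fin 3, _
        rw [hB]
        intro i j; fin_cases i <;> fin_cases j <;> exact ⟨rfl, rfl⟩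
    intro σ τ h
    apply Units.ext
    ext i j
    rw [← (hS σ i j).1, ← (hS τ i j).1, h]
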